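/- arXiv:1808.05470 — 3 statements merged into one kernel-verified Lean document; each statement's English description precedes it below -/
import Mathlib

section
/- For every μ ∈ ℕ⁵, the complex power series Σ_{n≥0} c_n t^n with coefficients c_n = (∏_{i=1}^{5} Γ((n + μᵢ + 1)/5)) / (5⁵ · n!) has radius of convergence exactly 5. -/
/-!
The radius is computed by the ratio test. With `xᵢ = (n + μᵢ + 1)/5`,
`cₙ₊₁ / cₙ = (n + 1)⁻¹ ∏ᵢ Γ(xᵢ + 1/5) / Γ(xᵢ)`. Log-convexity of `Γ` gives Wendel's limit
`Γ(x + s) / (Γ(x) xˢ) → 1` for `0 < s < 1` (`tendsto_Gamma_add_div`). Distributing `(n + 1)⁻¹` over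
the five factors as `(n + 1)^(-1/5)`, each of them tends to `(1/5)^(1/5)`, so the ratio tends to
`1/5`.
-/

open Filter Topology

/-- Upper half of Wendel's inequality. -/
lemma Gamma_add_le {x s : ℝ} (hx : 0 < x) (hs : 0 < s) (hs1 : s < 1) :
    Real.Gamma (x + s) ≤ Real.Gamma x * x ^ s := by
  have h := Real.Gamma_mul_add_mul_le_rpow_Gamma_mul_rpow_Gamma hx
    (by linarith : 0 < x + 1) (by linarith : 0 < 1 - s) hs (by ring)
  have hG := Real.Gamma_pos_of_pos hx
  rw [show (1 - s) * x + s * (x + 1) = x + s by ring, Real.Gamma_add_one hx.ne',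
    Real.mul_rpow hx.le hG.le, mul_left_comm, ← Real.rpow_add hG] at h
  simpa [mul_comm] using h

/-- Lower half of Wendel's inequality, from log-convexity between `x + s` and `x + s + 1`. -/
lemma mul_Gamma_le {x s : ℝ} (hx : 0 < x) (hs : 0 < s) (hs1 : s < 1) :
    x * Real.Gamma x ≤ Real.Gamma (x + s) * (x + s) ^ (1 - s) := by
  have h := Gamma_add_le (x := x + s) (s := 1 - s) (by linarith) (by linarith) (by linarith)
  rwa [show x + s + (1 - s) = x + 1 by ring, Real.Gamma_add_one hx.ne'] at h

/-- Wendel's limit. -/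
lemma tendsto_Gamma_add_div {s : ℝ} (hs : 0 < s) (hs1 : s < 1) :
    Tendsto (fun x : ℝ ↦ Real.Gamma (x + s) / (Real.Gamma x * x ^ s)) atTop (𝓝 1) := by
  have hlow : Tendsto (fun x : ℝ ↦ (x / (x + s)) ^ (1 - s)) atTop (𝓝 1) := by
    have h1 : Tendsto (fun x : ℝ ↦ 1 - s / (x + s)) atTop (𝓝 (1 - 0)) :=
      tendsto_const_nhds.sub
        (tendsto_const_nhds.div_atTop (tendsto_atTop_add_const_right _ _ tendsto_id))
    have h2 := h1.rpow_const (p := 1 - s) (by left; norm_num)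
    rw [sub_zero, Real.one_rpow] at h2
    refine h2.congr' ?_
    filter_upwards [eventually_gt_atTop 0] with x hx
    have : x + s ≠ 0 := by positivity
    congr 1
    field_simp
    ring
  refine tendsto_of_tendsto_of_tendsto_of_le_of_le' hlow tendsto_const_nhds ?_ ?_
  · filter_upwards [eventually_gt_atTop 0] with x hx
    have hG := Real.Gamma_pos_of_pos hx
    have hxs : 0 < x ^ s := by positivity
    have hxs' : 0 < (x + s) ^ (1 - s) := by positivity
    rw [Real.div_rpow hx.le (by positivity), div_le_div_iff₀ hxs' (by positivity)]
    calc x ^ (1 - s) * (Real.Gamma x * x ^ s)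
        = x ^ (1 - s) * x ^ s * Real.Gamma x := by ring
      _ = x * Real.Gamma x := by rw [← Real.rpow_add hx]; simp
      _ ≤ _ := mul_Gamma_le hx hs hs1
  · filter_upwards [eventually_gt_atTop 0] with x hx
    have hG := Real.Gamma_pos_of_pos hx
    exact div_le_one_of_le₀ (Gamma_add_le hx hs hs1) (by positivity)

/-- One of the five factors of `cₙ₊₁ / cₙ`, after giving it its share `(n + 1)^(-1/5)` of
`(n + 1)⁻¹`. -/
lemma tendsto_factor (m : ℕ) :
    Tendsto (fun n : ℕ ↦ Real.Gamma (((n : ℝ) + m + 1) / 5 + 1 / 5) /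
      Real.Gamma (((n : ℝ) + m + 1) / 5) / ((n : ℝ) + 1) ^ (1 / 5 : ℝ))
      atTop (𝓝 ((1 / 5 : ℝ) ^ (1 / 5 : ℝ))) := by
  have hcast : Tendsto (fun n : ℕ ↦ (n : ℝ) + 1) atTop atTop :=
    tendsto_atTop_add_const_right _ _ tendsto_natCast_atTop_atTop
  have hx : Tendsto (fun n : ℕ ↦ ((n : ℝ) + m + 1) / 5) atTop atTop :=
    (tendsto_atTop_add_const_right _ _ (tendsto_atTop_add_const_right _ _
      tendsto_natCast_atTop_atTop)).atTop_div_const (by norm_num)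
  have h1 := (tendsto_Gamma_add_div (s := 1 / 5) (by norm_num) (by norm_num)).comp hx
  have h2 : Tendsto (fun n : ℕ ↦ 1 / 5 + (m / 5 : ℝ) / ((n : ℝ) + 1)) atTop (𝓝 (1 / 5 + 0)) :=
    tendsto_const_nhds.add (tendsto_const_nhds.div_atTop hcast)
  have h3 := h1.mul (h2.rpow_const (p := 1 / 5) (by left; norm_num))
  rw [one_mul, add_zero] at h3
  refine h3.congr fun n ↦ ?_
  have hn : (0 : ℝ) < (n : ℝ) + 1 := by positivity
  have hy : (0 : ℝ) < ((n : ℝ) + m + 1) / 5 := by positivity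
  have hG := Real.Gamma_pos_of_pos hy
  have hys : 0 < (((n : ℝ) + m + 1) / 5) ^ (1 / 5 : ℝ) := by positivity
  have hns : 0 < ((n : ℝ) + 1) ^ (1 / 5 : ℝ) := by positivity
  have e : 1 / 5 + (m / 5 : ℝ) / ((n : ℝ) + 1) = (((n : ℝ) + m + 1) / 5) / ((n : ℝ) + 1) := by
    field_simp
    ring
  simp only [Function.comp_apply]
  rw [e, Real.div_rpow hy.le hn.le]
  generalize (((n : ℝ) + m + 1) / 5) ^ (1 / 5 : ℝ) = a at *
  generalize ((n : ℝ) + 1) ^ (1 / 5 : ℝ) = b at *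
  field_simp

lemma rpow_fifth_pow {a : ℝ} (ha : 0 ≤ a) : (a ^ (1 / 5 : ℝ)) ^ 5 = a := by
  rw [← Real.rpow_natCast, ← Real.rpow_mul ha]
  norm_num

/-- The one-modulus period series of the quintic around the orbifold point,
`Σₙ cₙ tⁿ` with `cₙ = (∏ᵢ Γ((n + μᵢ + 1)/5)) / (5⁵ · n!)`, has radius of
convergence exactly `5`. -/
theorem stmt_10 (μ : Fin 5 → ℕ) (p : FormalMultilinearSeries ℂ ℂ ℂ)
    (hp : ∀ n : ℕ, p n =
      (((∏ i, Real.Gamma (((n : ℝ) + (μ i : ℝ) + 1) / 5)) /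
          (5 ^ 5 * (n.factorial : ℝ)) : ℝ) : ℂ) •
        ContinuousMultilinearMap.mkPiAlgebraFin ℂ n ℂ) :
    p.radius = 5 := by
  set c : ℕ → ℝ := fun n ↦ (∏ i, Real.Gamma (((n : ℝ) + (μ i : ℝ) + 1) / 5)) /
          (5 ^ 5 * (n.factorial : ℝ)) with hc
  have hpc : p = FormalMultilinearSeries.ofScalars ℂ (fun n ↦ (c n : ℂ)) := by
    funext n
    rw [hp n]
    rfl
  have hG (n : ℕ) (i : Fin 5) : 0 < Real.Gamma (((n : ℝ) + (μ i : ℝ) + 1) / 5) :=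
    Real.Gamma_pos_of_pos (by positivity)
  have hpos (n : ℕ) : 0 < c n :=
    div_pos (Finset.prod_pos fun i _ ↦ hG n i) (by positivity)
  have hratio : Tendsto (fun n ↦ c (n + 1) / c n) atTop (𝓝 (1 / 5)) := by
    have h := tendsto_finsetProd (Finset.univ : Finset (Fin 5))
      fun i _ ↦ tendsto_factor (μ i)
    rw [Finset.prod_const, Finset.card_univ, Fintype.card_fin,
      rpow_fifth_pow (by norm_num)] at h
    refine h.congr fun n ↦ ?_
    have hn : (0 : ℝ) < (n : ℝ) + 1 := by positivity
    have hP : 0 < ∏ i, Real.Gamma (((n : ℝ) + (μ i : ℝ) + 1) / 5) :=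
      Finset.prod_pos fun i _ ↦ hG n i
    have hshift (i : Fin 5) : (((n + 1 : ℕ) : ℝ) + (μ i : ℝ) + 1) / 5 =
        ((n : ℝ) + (μ i : ℝ) + 1) / 5 + 1 / 5 := by
      push_cast
      ring
    rw [Finset.prod_div_distrib, Finset.prod_div_distrib, Finset.prod_const, Finset.card_univ,
      Fintype.card_fin, rpow_fifth_pow hn.le]
    simp only [hc, hshift, Nat.factorial_succ]
    have hf : (0 : ℝ) < n.factorial := by positivity
    push_cast
    field_simp
  have key : Tendsto (fun n : ℕ ↦ ‖(c n : ℂ)‖ / ‖(c n.succ : ℂ)‖) atTop (𝓝 ((5 : NNReal) : ℝ)) := by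
    have h := hratio.inv₀ (by norm_num)
    norm_num at h
    refine h.congr fun n ↦ ?_
    simp [Complex.norm_real, abs_of_pos (hpos _)]
  rw [hpc, FormalMultilinearSeries.ofScalars_radius_eq_of_tendsto ℂ _ (by norm_num) key]
  rfl
end

section
/- For each of the four pairs (t, (a,b)) given by t = (2,1,1,1,0) with (a,b) = (2/5,2/5); t = (2,2,1,0,0) with (a,b) = (1/5,3/5); t = (3,1,1,0,0) with (a,b) = (1/5,2/5); and t = (3,2,0,0,0) with (a,b) = (1/5,1/5), and for every natural number n, one has the Gamma-function identity 5^{5n} · n! · (Γ(n + a + b)/Γ(a + b)) · ∏_{i=1}^{5} Γ(n + (tᵢ+1)/5) = (5n)! · (Γ(n + a)/Γ(a)) · (Γ(n + b)/Γ(b)) · ∏_{i=1}^{5} Γ((tᵢ+1)/5). -/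
/-!
The case `m = 5` of the Gauss multiplication formula at integer arguments reads
`5^{5n} n! ∏_{k=1}^{4} Γ(n + k/5) = (5n)! ∏_{k=1}^{4} Γ(k/5)` and follows by induction on `n` from
`Γ(s + 1) = s Γ(s)`. In each of the four cases, the multiset `{a + b} ∪ {(tᵢ + 1)/5}` equals
`{1/5, 2/5, 3/5, 4/5} ∪ {a, b}`, so the claimed identity is this formula multiplied by
`Γ(n + a) Γ(n + b)` and divided by `Γ(a + b)`.
-/

/-- Gauss multiplication for the fifths, in the form relating `Γ(n + k/5)` to `Γ(k/5)`. -/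
theorem gamma_fifths (n : ℕ) :
    (5 : ℝ) ^ (5 * n) * (n.factorial : ℝ) *
        (Real.Gamma ((n : ℝ) + 1 / 5) * Real.Gamma ((n : ℝ) + 2 / 5) *
          Real.Gamma ((n : ℝ) + 3 / 5) * Real.Gamma ((n : ℝ) + 4 / 5)) =
      ((5 * n).factorial : ℝ) *
        (Real.Gamma (1 / 5) * Real.Gamma (2 / 5) * Real.Gamma (3 / 5) * Real.Gamma (4 / 5)) := by
  induction n with
  | zero => simp
  | succ n ih =>
    have step : ∀ c : ℝ, 0 < c →
        Real.Gamma (((n + 1 : ℕ) : ℝ) + c) = ((n : ℝ) + c) * Real.Gamma ((n : ℝ) + c) := by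
      intro c hc
      rw [← Real.Gamma_add_one (by positivity)]
      congr 1
      push_cast
      ring
    rw [step (1 / 5) (by norm_num), step (2 / 5) (by norm_num), step (3 / 5) (by norm_num),
      step (4 / 5) (by norm_num), show 5 * (n + 1) = 5 * n + 1 + 1 + 1 + 1 + 1 by ring]
    simp only [Nat.factorial_succ, pow_succ]
    push_cast
    linear_combination (5 * (n : ℝ) + 1) * (5 * n + 2) * (5 * n + 3) * (5 * n + 4) * (5 * n + 5) * ih

/-- The Gamma-function identity expressing that the first-order (in `φ_t`) quintic
periods are hypergeometric functions with the parameters `(a,b)` of the paper's table: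
for each of the four pairs `(t,(a,b))` and every `n`,
`5^{5n} n! (Γ(n+a+b)/Γ(a+b)) ∏ᵢ Γ(n+(tᵢ+1)/5)
  = (5n)! (Γ(n+a)/Γ(a)) (Γ(n+b)/Γ(b)) ∏ᵢ Γ((tᵢ+1)/5)`. -/
theorem stmt_11 (t : Fin 5 → ℕ) (a b : ℝ)
    (h : (t = ![2,1,1,1,0] ∧ a = 2/5 ∧ b = 2/5) ∨
         (t = ![2,2,1,0,0] ∧ a = 1/5 ∧ b = 3/5) ∨
         (t = ![3,1,1,0,0] ∧ a = 1/5 ∧ b = 2/5) ∨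
         (t = ![3,2,0,0,0] ∧ a = 1/5 ∧ b = 1/5))
    (n : ℕ) :
    (5 : ℝ) ^ (5 * n) * (n.factorial : ℝ) *
        (Real.Gamma ((n : ℝ) + a + b) / Real.Gamma (a + b)) *
        ∏ i, Real.Gamma ((n : ℝ) + ((t i : ℝ) + 1) / 5) =
      ((5 * n).factorial : ℝ) * (Real.Gamma ((n : ℝ) + a) / Real.Gamma a) *
        (Real.Gamma ((n : ℝ) + b) / Real.Gamma b) *
        ∏ i, Real.Gamma (((t i : ℝ) + 1) / 5) := by
  have h1 : Real.Gamma (1 / 5) ≠ 0 := (Real.Gamma_pos_of_pos (by norm_num)).ne'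
  have h2 : Real.Gamma (2 / 5) ≠ 0 := (Real.Gamma_pos_of_pos (by norm_num)).ne'
  have h3 : Real.Gamma (3 / 5) ≠ 0 := (Real.Gamma_pos_of_pos (by norm_num)).ne'
  have h4 : Real.Gamma (4 / 5) ≠ 0 := (Real.Gamma_pos_of_pos (by norm_num)).ne'
  have key := gamma_fifths n
  -- Naming the Gamma values keeps `field_simp` from rewriting their arguments.
  rcases h with ⟨rfl, rfl, rfl⟩ | ⟨rfl, rfl, rfl⟩ | ⟨rfl, rfl, rfl⟩ | ⟨rfl, rfl, rfl⟩ <;>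
    simp only [Fin.prod_univ_five, add_assoc, Matrix.cons_val] <;>
    norm_num at key h1 h2 h3 h4 ⊢ <;>
    generalize Real.Gamma ((n : ℝ) + 1 / 5) = G1 at * <;>
    generalize Real.Gamma ((n : ℝ) + 2 / 5) = G2 at * <;>
    generalize Real.Gamma ((n : ℝ) + 3 / 5) = G3 at * <;>
    generalize Real.Gamma ((n : ℝ) + 4 / 5) = G4 at * <;>
    generalize Real.Gamma (1 / 5) = g1 at * <;>
    generalize Real.Gamma (2 / 5) = g2 at * <;>
    generalize Real.Gamma (3 / 5) = g3 at * <;>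
    generalize Real.Gamma (4 / 5) = g4 at * <;>
    field_simp
  · linear_combination G2 * G2 * key
  · linear_combination G1 * G3 * key
  · linear_combination G1 * G2 * key
  · linear_combination G1 * G1 * key
end

section
/- Let W₀ = X₁⁵ + ⋯ + X₅⁵ ∈ ℂ[X₁,…,X₅], J the ideal generated by the partial derivatives ∂W₀/∂Xᵢ = 5Xᵢ⁴, and R₀ = ℂ[X₁,…,X₅]/J the Milnor ring. Let ζ = exp(2πi/5) and let g be the ℂ-algebra automorphism of ℂ[X₁,…,X₅] determined by g(Xᵢ) = ζ·Xᵢ for all i. Then g maps J onto J, hence induces a ℂ-linear automorphism ḡ of R₀, and the fixed subspace R₀^Q = {v ∈ R₀ : ḡ(v) = v} has ℂ-dimension 204. -/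
/-!
The Jacobian ideal is the monomial ideal `(X₁⁴, …, X₅⁴)`, so a polynomial lies in it iff its
coefficients at all *reduced* exponents (every entry `< 4`) vanish (`mem_Jac_iff`). The map `g` is
diagonal on monomials, scaling `X^m` by `ζ^|m|` (`coeff_g`). Hence a class `[p]` is fixed iff the
reduced exponents carrying a nonzero coefficient of `p` satisfy `ζ^|m| = 1`, that is `5 ∣ |m|`, as
`ζ` is a primitive fifth root of unity. The classes of the monomials `X^m` with `m` reduced and
`5 ∣ |m|` are therefore a basis of the fixed subspace; the linear map `invMap` sends the coordinate
space of this basis isomorphically onto the fixed subspace. There are `1 + 101 + 101 + 1 = 204`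
such exponents, in degrees `0, 5, 10, 15`.
-/

open MvPolynomial Real

/-- The quintic Fermat superpotential `W₀ = X₁⁵ + ⋯ + X₅⁵`. -/
noncomputable def W₀ : MvPolynomial (Fin 5) ℂ := ∑ i, X i ^ 5

/-- The Jacobian ideal of `W₀`, generated by the partial derivatives `∂W₀/∂Xᵢ`. -/
noncomputable def Jac : Ideal (MvPolynomial (Fin 5) ℂ) :=
  Ideal.span (Set.range fun i => pderiv i W₀)

/-- The reduced exponents (entries in `{0, 1, 2, 3}`) of total degree divisible by `5`. -/
abbrev InvExp : Type := {e : Fin 5 → Fin 4 // 5 ∣ ∑ i, (e i : ℕ)}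

/-- A reduced invariant exponent as an exponent vector of `MvPolynomial (Fin 5) ℂ`. -/
noncomputable def InvExp.toFinsupp (e : InvExp) : Fin 5 →₀ ℕ :=
  Finsupp.equivFunOnFinite.symm fun i => (e.1 i : ℕ)

lemma InvExp.toFinsupp_apply (e : InvExp) (i : Fin 5) : e.toFinsupp i = (e.1 i : ℕ) := rfl

lemma InvExp.toFinsupp_injective : Function.Injective InvExp.toFinsupp := by
  intro a b h
  apply Subtype.ext
  funext i
  apply Fin.ext
  simpa [InvExp.toFinsupp_apply] using DFunLike.congr_fun h i

set_option maxRecDepth 100000 in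
lemma card_InvExp : Fintype.card InvExp = 204 := by
  decide +kernel

lemma pderiv_W₀ (i : Fin 5) : pderiv i W₀ = C 5 * X i ^ 4 := by
  unfold W₀
  rw [map_sum, Finset.sum_eq_single i]
  · have h5 : (C 5 : MvPolynomial (Fin 5) ℂ) = 5 := map_ofNat C 5
    simp [Derivation.leibniz_pow, nsmul_eq_mul, h5]
  · intro j _ hj
    simp [Derivation.leibniz_pow, pderiv_X_of_ne hj]
  · simp

lemma Jac_eq : Jac = Ideal.span ((fun m => monomial m (1 : ℂ)) ''
    Set.range fun i : Fin 5 => Finsupp.single i 4) := by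
  have h5 : (C (5 : ℂ)⁻¹ * C 5 : MvPolynomial (Fin 5) ℂ) = 1 := by
    rw [← C_mul]; norm_num
  unfold Jac
  rw [← Set.range_comp]
  apply le_antisymm <;> rw [Ideal.span_le] <;> rintro _ ⟨i, rfl⟩
  · simp only [pderiv_W₀, SetLike.mem_coe]
    apply Ideal.mul_mem_left
    rw [X_pow_eq_monomial]
    exact Ideal.subset_span ⟨i, rfl⟩
  · have h : (monomial (Finsupp.single i 4) (1 : ℂ)) = C (5 : ℂ)⁻¹ * pderiv i W₀ := by
      rw [pderiv_W₀, ← mul_assoc, h5, one_mul, X_pow_eq_monomial]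
    simp only [Function.comp_apply, SetLike.mem_coe]
    rw [h]
    exact Ideal.mul_mem_left _ _ (Ideal.subset_span ⟨i, rfl⟩)

lemma mem_Jac_iff (p : MvPolynomial (Fin 5) ℂ) :
    p ∈ Jac ↔ ∀ m : Fin 5 →₀ ℕ, (∀ i, m i < 4) → coeff m p = 0 := by
  rw [Jac_eq, mem_ideal_span_monomial_image]
  simp only [Set.exists_range_iff, Finsupp.single_le_iff, mem_support_iff]
  refine forall_congr' fun m => ?_
  rw [← not_imp_not]
  simp

section
variable {ζ : ℂ} {g : MvPolynomial (Fin 5) ℂ →ₐ[ℂ] MvPolynomial (Fin 5) ℂ}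

lemma g_monomial (hg : ∀ i, g (X i) = ζ • X i) (m : Fin 5 →₀ ℕ) (c : ℂ) :
    g (monomial m c) = ζ ^ (∑ i, m i) • monomial m c := by
  have h : monomial m c = C c * ∏ i, (X i : MvPolynomial (Fin 5) ℂ) ^ m i := by
    rw [monomial_eq, Finsupp.prod_fintype _ _ (by simp)]
  have hC : g (C c) = C c := g.commutes c
  rw [h, map_mul, map_prod, hC]
  simp only [map_pow, hg, smul_pow, Finset.prod_smul, Finset.prod_pow_eq_pow_sum, mul_smul_comm]

lemma coeff_g (hg : ∀ i, g (X i) = ζ • X i) (p : MvPolynomial (Fin 5) ℂ) (m : Fin 5 →₀ ℕ) :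
    coeff m (g p) = ζ ^ (∑ i, m i) * coeff m p := by
  induction p using MvPolynomial.induction_on' with
  | monomial n c =>
    rw [g_monomial hg, coeff_smul, coeff_monomial, smul_eq_mul]
    split_ifs with h
    · rw [h]
    · simp
  | add p q hp hq => rw [map_add, coeff_add, hp, hq, coeff_add, mul_add]

lemma g_mem_Jac (hg : ∀ i, g (X i) = ζ • X i) {p : MvPolynomial (Fin 5) ℂ} (hp : p ∈ Jac) :
    g p ∈ Jac := by
  rw [mem_Jac_iff] at hp ⊢
  intro m hm
  rw [coeff_g hg, hp m hm, mul_zero]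

lemma map_g_Jac (hg : ∀ i, g (X i) = ζ • X i) (h0 : ζ ≠ 0) : Ideal.map g Jac = Jac := by
  apply le_antisymm
  · exact Ideal.map_le_iff_le_comap.2 fun p hp => g_mem_Jac hg hp
  · conv_lhs => rw [Jac]
    rw [Ideal.span_le]
    rintro _ ⟨i, rfl⟩
    have hC : g (C 5) = C 5 := g.commutes 5
    -- each generator is an eigenvector of `g` with the nonzero eigenvalue `ζ⁴`
    have h : pderiv i W₀ = C (ζ ^ 4)⁻¹ * g (pderiv i W₀) := by
      rw [pderiv_W₀, map_mul, map_pow, hg, hC, smul_pow, mul_smul_comm, ← C_mul', ← mul_assoc,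
        ← C_mul, inv_mul_cancel₀ (pow_ne_zero 4 h0), C_1, one_mul]
    simp only [SetLike.mem_coe]
    rw [h]
    exact Ideal.mul_mem_left _ _ (Ideal.mem_map_of_mem _ (Ideal.subset_span ⟨i, rfl⟩))

end

/-- The polynomial `∑ₑ f(e) X^e` over the reduced invariant exponents `e`. -/
noncomputable def invPoly : (InvExp → ℂ) →ₗ[ℂ] MvPolynomial (Fin 5) ℂ :=
  ∑ e : InvExp, (monomial e.toFinsupp) ∘ₗ LinearMap.proj e

lemma invPoly_apply (f : InvExp → ℂ) :
    invPoly f = ∑ e : InvExp, monomial e.toFinsupp (f e) := by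
  simp [invPoly]

lemma coeff_invPoly (f : InvExp → ℂ) (e : InvExp) : coeff e.toFinsupp (invPoly f) = f e := by
  rw [invPoly_apply, coeff_sum, Finset.sum_eq_single e]
  · simp
  · intro b _ hb
    rw [coeff_monomial, if_neg fun h => hb (InvExp.toFinsupp_injective h)]
  · simp

lemma coeff_invPoly_of_not_dvd (f : InvExp → ℂ) (m : Fin 5 →₀ ℕ) (hm : ¬ 5 ∣ ∑ i, m i) :
    coeff m (invPoly f) = 0 := by
  rw [invPoly_apply, coeff_sum]
  refine Finset.sum_eq_zero fun e _ => ?_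
  rw [coeff_monomial, if_neg]
  rintro rfl
  exact hm e.2

/-- The class of `∑ₑ f(e) X^e` in the Milnor ring, as a linear function of `f`. -/
noncomputable def invMap : (InvExp → ℂ) →ₗ[ℂ] (MvPolynomial (Fin 5) ℂ ⧸ Jac) :=
  (Ideal.Quotient.mkₐ ℂ Jac).toLinearMap ∘ₗ invPoly

lemma invMap_apply (f : InvExp → ℂ) : invMap f = Ideal.Quotient.mk Jac (invPoly f) := rfl

lemma invMap_injective : Function.Injective invMap := by
  rw [← LinearMap.ker_eq_bot, LinearMap.ker_eq_bot']
  intro f hf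
  rw [invMap_apply, Ideal.Quotient.eq_zero_iff_mem, mem_Jac_iff] at hf
  funext e
  have := hf e.toFinsupp fun i => (e.1 i).2
  rwa [coeff_invPoly] at this

/-- The quantum symmetry `g : Xᵢ ↦ ζXᵢ` with `ζ = e^{2πi/5}` preserves the Jacobian
ideal of `W₀ = Σᵢ Xᵢ⁵`, hence induces a linear automorphism `ḡ` of the Milnor ring
`R₀ = ℂ[X]/⟨∂ᵢW₀⟩`, and the fixed subspace of any such induced map `ḡ` has
`ℂ`-dimension `204`. -/
theorem stmt_14 (ζ : ℂ) (hζ : ζ = Complex.exp (2 * π * Complex.I / 5))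
    (g : MvPolynomial (Fin 5) ℂ →ₐ[ℂ] MvPolynomial (Fin 5) ℂ)
    (hg : ∀ i, g (X i) = ζ • X i) :
    Ideal.map g Jac = Jac ∧
    (∃ gbar : (MvPolynomial (Fin 5) ℂ ⧸ Jac) →ₗ[ℂ] (MvPolynomial (Fin 5) ℂ ⧸ Jac),
      ∀ p, gbar (Ideal.Quotient.mk Jac p) = Ideal.Quotient.mk Jac (g p)) ∧
    ∀ gbar : (MvPolynomial (Fin 5) ℂ ⧸ Jac) →ₗ[ℂ] (MvPolynomial (Fin 5) ℂ ⧸ Jac),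
      (∀ p, gbar (Ideal.Quotient.mk Jac p) = Ideal.Quotient.mk Jac (g p)) →
      Module.finrank ℂ (LinearMap.ker (gbar - LinearMap.id)) = 204 := by
  have hprim : IsPrimitiveRoot ζ 5 := by
    rw [hζ]
    exact_mod_cast Complex.isPrimitiveRoot_exp 5 (by norm_num)
  refine ⟨map_g_Jac hg (hprim.ne_zero (by norm_num)),
    ⟨(Ideal.quotientMapₐ Jac g fun p hp => g_mem_Jac hg hp).toLinearMap, fun p => rfl⟩, ?_⟩
  intro gbar hgbar
  have hrange : LinearMap.ker (gbar - LinearMap.id) = LinearMap.range invMap := by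
    apply le_antisymm
    · intro v hv
      obtain ⟨p, rfl⟩ := Ideal.Quotient.mk_surjective v
      rw [LinearMap.mem_ker, LinearMap.sub_apply, LinearMap.id_apply, hgbar, ← map_sub,
        Ideal.Quotient.eq_zero_iff_mem, mem_Jac_iff] at hv
      refine ⟨fun e => coeff e.toFinsupp p, ?_⟩
      rw [invMap_apply, Ideal.Quotient.eq, mem_Jac_iff]
      intro m hm
      rw [coeff_sub, sub_eq_zero]
      by_cases h5 : 5 ∣ ∑ i, m i
      · obtain ⟨e, rfl⟩ : ∃ e : InvExp, e.toFinsupp = m :=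
          ⟨⟨fun i => ⟨m i, hm i⟩, h5⟩, Finsupp.ext fun i => rfl⟩
        rw [coeff_invPoly]
      · rw [coeff_invPoly_of_not_dvd _ _ h5]
        have h := hv m hm
        rw [coeff_sub, coeff_g hg, ← sub_one_mul] at h
        exact ((mul_eq_zero.1 h).resolve_left fun h1 =>
          h5 (hprim.dvd_of_pow_eq_one _ (sub_eq_zero.1 h1))).symm
    · rintro _ ⟨f, rfl⟩
      rw [LinearMap.mem_ker, LinearMap.sub_apply, LinearMap.id_apply, invMap_apply, hgbar,
        sub_eq_zero]
      congr 1
      ext m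
      rw [coeff_g hg]
      by_cases h5 : 5 ∣ ∑ i, m i
      · rw [(hprim.pow_eq_one_iff_dvd _).2 h5, one_mul]
      · rw [coeff_invPoly_of_not_dvd _ _ h5, mul_zero]
  rw [hrange, LinearMap.finrank_range_of_inj invMap_injective, Module.finrank_fintype_fun_eq_card,
    card_InvExp]
end
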